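/- For every infinite cardinal κ, the class of all simple graphs with fewer than κ vertices is indivisible. -/

import Mathlib

open SimpleGraph

universe u

/-- A class of (not necessarily finite) simple graphs is indivisible. -/
def IndivisibleU (K : ∀ V : Type u, SimpleGraph V → Prop) : Prop :=
  ∀ (V : Type u) (A : SimpleGraph V), K V A → ∀ k : ℕ, 0 < k →
    ∃ (W : Type u) (B : SimpleGraph W), K W B ∧
      ∀ c : W → Fin k, ∃ f : A ↪g B, ∀ x y, c (f x) = c (f y)

/-- The lexicographic product `A[B]`: every vertex of `A` is replaced by a copy of `B`. -/
def lexProduct {V W : Type*} (A : SimpleGraph V) (B : SimpleGraph W) : SimpleGraph (V × W) where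
  Adj p q := A.Adj p.1 q.1 ∨ p.1 = q.1 ∧ B.Adj p.2 q.2
  symm := ⟨fun _ _ h => h.imp (fun h => h.symm) (fun h => ⟨h.1.symm, h.2.symm⟩)⟩
  loopless := ⟨fun _ h => h.elim A.irrefl (fun h => B.irrefl h.2)⟩

/-- The copy of `B` in `A[B]` that replaces the vertex `v`. -/
def lexProductFiber {V W : Type*} (A : SimpleGraph V) (B : SimpleGraph W) (v : V) :
    B ↪g lexProduct A B where
  toFun w := (v, w)
  inj' _ _ h := (Prod.mk.inj h).2
  map_rel_iff' := ⟨fun h => h.elim (fun h => (A.irrefl h).elim) And.right, fun h => Or.inr ⟨rfl, h⟩⟩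

/-- The copy of `A` in `A[B]` obtained by selecting one vertex in each copy of `B`. -/
def lexProductTransversal {V W : Type*} (A : SimpleGraph V) (B : SimpleGraph W) (g : V → W) :
    A ↪g lexProduct A B where
  toFun v := (v, g v)
  inj' _ _ h := (Prod.mk.inj h).1
  map_rel_iff' := by
    intro v v'
    refine ⟨?_, Or.inl⟩
    rintro (h | ⟨h, h'⟩)
    · exact h
    · obtain rfl : v = v' := h
      exact (B.irrefl h').elim

theorem exists_monochromatic_embedding {κ : Cardinal.{u}} (hκ : Cardinal.aleph0 ≤ κ)
    {V : Type u} (A : SimpleGraph V) (hV : Cardinal.mk V < κ) (n : ℕ) :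
    ∃ (W : Type u) (B : SimpleGraph W), Cardinal.mk W < κ ∧
      ∀ c : W → ℕ, (∀ w, c w < n) → ∃ f : A ↪g B, ∀ x y, c (f x) = c (f y) := by
  induction n with
  | zero =>
    refine ⟨PUnit, ⊥, ?_, fun c hc => absurd (hc PUnit.unit) (Nat.not_lt_zero _)⟩
    exact (Cardinal.mk_lt_aleph0).trans_le hκ
  | succ n ih =>
    obtain ⟨W, B, hW, hB⟩ := ih
    refine ⟨V × W, lexProduct A B, ?_, fun c hc => ?_⟩
    · rw [Cardinal.mk_prod, Cardinal.lift_id, Cardinal.lift_id]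
      exact Cardinal.mul_lt_of_lt hκ hV hW
    · by_cases h : ∀ v, ∃ w, c (v, w) = n
      · choose g hg using h
        exact ⟨lexProductTransversal A B g, fun x y => (hg x).trans (hg y).symm⟩
      · push Not at h
        obtain ⟨v, hv⟩ := h
        obtain ⟨f, hf⟩ := hB (fun w => c (v, w))
          fun w => lt_of_le_of_ne (Nat.lt_succ_iff.mp (hc (v, w))) (hv w)
        exact ⟨f.trans (lexProductFiber A B v), hf⟩

theorem graphs_lt_kappa_indivisible (κ : Cardinal.{u}) (hκ : Cardinal.aleph0 ≤ κ) :
    IndivisibleU (fun (V : Type u) (_ : SimpleGraph V) => Cardinal.mk V < κ) := by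
  intro V A hV k _
  obtain ⟨W, B, hW, hB⟩ := exists_monochromatic_embedding hκ A hV k
  refine ⟨W, B, hW, fun c => ?_⟩
  obtain ⟨f, hf⟩ := hB (fun w => c w) fun w => (c w).isLt
  exact ⟨f, fun x y => Fin.ext (hf x y)⟩
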